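/- arXiv:1106.4676 — 2 statements merged into one kernel-verified Lean document; each statement's English description precedes it below -/
import Mathlib

section
/- Let (X,ρ) be a metric space in which every proper closed ball (closed ball B(x,α) = {y : ρ(x,y) ≤ α} with B(x,α) ≠ X) is separable. If (CL(X), W_ρ) is a normal topological space, then d(X) ≤ ℵ₁. -/
/-!
Suppose `d(X) > ℵ₁`. Then some `D ⊆ X` is `ε`-separated, for some `ε > 0`, and has more than `ℵ₁`
points (`exists_separated_of_aleph_one_lt`).

If proper closed balls are separable, then, for fixed `x` and `a`, the points `q` with
`ρ(x,q) < ρ(x,a)` lie in countably many proper closed balls, so only countably many of them belong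
to `D`. For all other `q ∈ D` one has `ρ(x,{a,q}) = ρ(x,a)`. Hence `{a,q} → {a}` in the Wijsman
topology when `q` runs through `D` along the cocountable filter (`tendsto_pair`).

Take `P ⊆ D` with `ℵ₁` points. The closed sets lying in the closure of `P` and those lying in the
closure of `D \ P` form two disjoint Wijsman-closed families. Suppose that open sets `U` and `V`
separate them. For each `p ∈ P`, all but countably many `q ∈ D` satisfy `{p,q} ∈ U`; as
`#P = ℵ₁ < #D`, a single `q ∈ D \ P` satisfies `{p,q} ∈ U` for every `p ∈ P`. Now `{q} ∈ V`, so
`{p,q} ∈ V` for all but countably many `p`, hence for some `p ∈ P`, and `U` meets `V`. This is the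
argument by which the plank `(ω₁ + 1) × (ω₂ + 1)` without its corner is not normal.
-/

open Cardinal Set Metric Topology

universe u v

/-- The hyperspace of all nonempty closed subsets of a topological space. -/
def CL (X : Type u) [TopologicalSpace X] : Type u :=
  {A : Set X // A.Nonempty ∧ IsClosed A}

/-- The Wijsman topology on `CL X` determined by a metric `m` on `X`:
the weak (initial) topology determined by the distance functionals
`A ↦ ρ(x, A) = inf {ρ(x,a) : a ∈ A}`, `x ∈ X`. -/
noncomputable def wijsman (X : Type u) [TopologicalSpace X] (m : MetricSpace X) :
    TopologicalSpace (CL X) :=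
  ⨅ x : X, TopologicalSpace.induced
    (fun A : CL X => @Metric.infDist X m.toPseudoMetricSpace x A.1) inferInstance

/-- The lower Vietoris topology on `CL X`, with subbase `{U⁻ : U open}` where
`U⁻ = {A ∈ CL X : A ∩ U ≠ ∅}`. -/
def lowerVietoris (X : Type u) [TopologicalSpace X] : TopologicalSpace (CL X) :=
  TopologicalSpace.generateFrom
    { S | ∃ U : Set X, IsOpen U ∧ S = { A : CL X | (A.1 ∩ U).Nonempty } }

/-- The Vietoris topology on `CL X`, with subbase `{U⁻ : U open} ∪ {U⁺ : U open}`. -/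
def vietoris (X : Type u) [TopologicalSpace X] : TopologicalSpace (CL X) :=
  TopologicalSpace.generateFrom
    ({ S | ∃ U : Set X, IsOpen U ∧ S = { A : CL X | (A.1 ∩ U).Nonempty } } ∪
     { S | ∃ U : Set X, IsOpen U ∧ S = { A : CL X | A.1 ⊆ U } })

/-- The subspace topology on a subset. -/
def subTop {Y : Type u} (t : TopologicalSpace Y) (S : Set Y) : TopologicalSpace ↥S :=
  TopologicalSpace.induced Subtype.val t

section CardinalFunctions

variable (Y : Type u) (t : TopologicalSpace Y)

/-- `ℬ` is a base of the topology `t`. -/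
def IsBase (ℬ : Set (Set Y)) : Prop :=
  (∀ U ∈ ℬ, t.IsOpen U) ∧ ∀ U, t.IsOpen U → ∀ x ∈ U, ∃ V ∈ ℬ, x ∈ V ∧ V ⊆ U

/-- The weight: `ℵ₀` plus the least cardinality of a base. -/
noncomputable def weight : Cardinal.{u} :=
  ℵ₀ + sInf { c : Cardinal.{u} | ∃ ℬ : Set (Set Y), IsBase Y t ℬ ∧ #↥ℬ = c }

/-- The density: `ℵ₀` plus the least cardinality of a dense subset. -/
noncomputable def density : Cardinal.{u} :=
  ℵ₀ + sInf { c : Cardinal.{u} | ∃ D : Set Y, @Dense Y t D ∧ #↥D = c }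

/-- A π-base: a family of nonempty open sets such that every nonempty open set
contains a member. -/
def IsPiBase (𝒢 : Set (Set Y)) : Prop :=
  (∀ G ∈ 𝒢, t.IsOpen G ∧ G.Nonempty) ∧
    ∀ U : Set Y, t.IsOpen U → U.Nonempty → ∃ G ∈ 𝒢, G ⊆ U

/-- The π-weight: `ℵ₀` plus the least cardinality of a π-base. -/
noncomputable def piWeight : Cardinal.{u} :=
  ℵ₀ + sInf { c : Cardinal.{u} | ∃ 𝒢 : Set (Set Y), IsPiBase Y t 𝒢 ∧ #↥𝒢 = c }

/-- A local π-base at `y`: a family of nonempty open sets such that every open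
neighborhood of `y` contains a member. -/
def IsLocalPiBase (y : Y) (𝒢 : Set (Set Y)) : Prop :=
  (∀ G ∈ 𝒢, t.IsOpen G ∧ G.Nonempty) ∧
    ∀ U : Set Y, t.IsOpen U → y ∈ U → ∃ G ∈ 𝒢, G ⊆ U

/-- The π-character at a point. -/
noncomputable def piCharacterAt (y : Y) : Cardinal.{u} :=
  ℵ₀ + sInf { c : Cardinal.{u} | ∃ 𝒢 : Set (Set Y), IsLocalPiBase Y t y 𝒢 ∧ #↥𝒢 = c }

/-- The π-character of the space. -/
noncomputable def piCharacter : Cardinal.{u} := ⨆ y : Y, piCharacterAt Y t y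

/-- The pseudocharacter at a point: `ℵ₀` plus the least cardinality of a family of
open sets whose intersection is `{y}`. -/
noncomputable def pseudoCharacterAt (y : Y) : Cardinal.{u} :=
  ℵ₀ + sInf { c : Cardinal.{u} | ∃ 𝒰 : Set (Set Y),
    (∀ U ∈ 𝒰, t.IsOpen U) ∧ ⋂₀ 𝒰 = {y} ∧ #↥𝒰 = c }

/-- The pseudocharacter of the space. -/
noncomputable def pseudoCharacter : Cardinal.{u} := ⨆ y : Y, pseudoCharacterAt Y t y

/-- The pseudoweight: `ℵ₀` plus the least cardinality of a point-separating family
of open sets. -/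
noncomputable def pseudoWeight : Cardinal.{u} :=
  ℵ₀ + sInf { c : Cardinal.{u} | ∃ 𝒰 : Set (Set Y), (∀ U ∈ 𝒰, t.IsOpen U) ∧
    (∀ x y : Y, x ≠ y → ∃ U ∈ 𝒰, (x ∈ U ∧ y ∉ U) ∨ (y ∈ U ∧ x ∉ U)) ∧ #↥𝒰 = c }

/-- The net weight: `ℵ₀` plus the least cardinality of a network. -/
noncomputable def netWeight : Cardinal.{u} :=
  ℵ₀ + sInf { c : Cardinal.{u} | ∃ 𝒩 : Set (Set Y),
    (∀ U : Set Y, t.IsOpen U → ∀ x ∈ U, ∃ M ∈ 𝒩, x ∈ M ∧ M ⊆ U) ∧ #↥𝒩 = c }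

/-- The tightness at a point. -/
noncomputable def tightnessAt (y : Y) : Cardinal.{u} :=
  ℵ₀ + sInf { κ : Cardinal.{u} | ∀ A : Set Y, y ∈ @closure Y t A →
      ∃ B ⊆ A, #↥B ≤ κ ∧ y ∈ @closure Y t B }

/-- The tightness of the space. -/
noncomputable def tightness : Cardinal.{u} := ⨆ y : Y, tightnessAt Y t y

/-- The Lindelöf number. -/
noncomputable def lindelofNumber : Cardinal.{u} :=
  ℵ₀ + sInf { κ : Cardinal.{u} | ∀ 𝒞 : Set (Set Y), (∀ U ∈ 𝒞, t.IsOpen U) →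
      ⋃₀ 𝒞 = Set.univ → ∃ 𝒟 ⊆ 𝒞, #↥𝒟 ≤ κ ∧ ⋃₀ 𝒟 = Set.univ }

/-- The extent: `ℵ₀` plus the supremum of the cardinalities of closed discrete
subspaces. -/
noncomputable def extent : Cardinal.{u} :=
  ℵ₀ + sSup { c : Cardinal.{u} | ∃ D : Set Y, @IsClosed Y t D ∧
    @DiscreteTopology ↥D (subTop t D) ∧ #↥D = c }

/-- The spread: `ℵ₀` plus the supremum of the cardinalities of discrete subspaces. -/
noncomputable def spread : Cardinal.{u} :=
  ℵ₀ + sSup { c : Cardinal.{u} | ∃ D : Set Y,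
    @DiscreteTopology ↥D (subTop t D) ∧ #↥D = c }

/-- The diagonal degree: `ℵ₀` plus the least cardinality of a family of open subsets
of `Y × Y` whose intersection is the diagonal. -/
noncomputable def diagonalDegree : Cardinal.{u} :=
  ℵ₀ + sInf { c : Cardinal.{u} | ∃ 𝒢 : Set (Set (Y × Y)),
    (∀ G ∈ 𝒢, @IsOpen (Y × Y) (@instTopologicalSpaceProd Y Y t t) G) ∧
    ⋂₀ 𝒢 = { p : Y × Y | p.1 = p.2 } ∧ #↥𝒢 = c }

/-- The uniform weight: `ℵ₀` plus the least cardinality of a base of a compatible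
uniformity. -/
noncomputable def uniformWeight : Cardinal.{u} :=
  ℵ₀ + sInf { c : Cardinal.{u} | ∃ U : UniformSpace Y, U.toTopologicalSpace = t ∧
    ∃ 𝒲 : Set (Set (Y × Y)), (∀ W ∈ 𝒲, W ∈ @uniformity Y U) ∧
      (∀ s ∈ @uniformity Y U, ∃ W ∈ 𝒲, W ⊆ s) ∧ #↥𝒲 = c }

/-- The weak weight: the least weight of a Tychonoff space onto which `Y` maps by a
continuous bijection. -/
noncomputable def weakWeight : Cardinal.{u} :=
  sInf { c : Cardinal.{u} | ∃ (Z : Type u) (s : TopologicalSpace Z) (f : Y → Z),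
    @T35Space Z s ∧ @Continuous Y Z t s f ∧ Function.Bijective f ∧ weight Z s = c }

end CardinalFunctions

/-- The hereditary version of a cardinal function: the supremum over all subspaces. -/
noncomputable def hered (f : (Z : Type u) → TopologicalSpace Z → Cardinal.{u})
    (Y : Type u) (t : TopologicalSpace Y) : Cardinal.{u} :=
  ⨆ S : Set Y, f ↥S (subTop t S)

section Helpers

variable {X : Type u} [MetricSpace X]

theorem countable_of_separated_of_isSeparable {ε : ℝ} (hε : 0 < ε) {E S : Set X}
    (hE : E.Pairwise fun x y => ε ≤ dist x y) (hES : E ⊆ S)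
    (hS : TopologicalSpace.IsSeparable S) : E.Countable := by
  obtain ⟨c, hc, hSc⟩ := hS
  have key : ∀ x : E, ∃ y : c, dist (x : X) y < ε / 2 := fun x => by
    obtain ⟨y, hy, hxy⟩ := Metric.mem_closure_iff.1 (hSc (hES x.2)) (ε / 2) (half_pos hε)
    exact ⟨⟨y, hy⟩, hxy⟩
  choose f hf using key
  have : Countable c := hc.to_subtype
  have hinj : Function.Injective f := by
    intro x y hxy
    by_contra hne
    have h1 := hE x.2 y.2 (fun h => hne (Subtype.ext h))
    have h2 := hf x
    have h3 := hf y
    rw [hxy] at h2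
    have h4 := dist_triangle_right (x : X) y (f y)
    linarith
  exact hinj.countable

/-- The open ball about `x` reaching to `a` is covered by countably many closed balls missing `a`,
so it is separable and meets a separated set in a countable set. -/
theorem countable_dist_lt {ε : ℝ} (hε : 0 < ε) {D : Set X}
    (hD : D.Pairwise fun x y => ε ≤ dist x y)
    (h : ∀ (x : X) (α : ℝ), closedBall x α ≠ Set.univ →
      TopologicalSpace.IsSeparable (closedBall x α)) (x a : X) :
    {q : D | dist x q < dist x a}.Countable := by
  have hS : TopologicalSpace.IsSeparable (⋃ n : ℕ, closedBall x (dist x a - 1 / (n + 1 : ℝ))) := by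
    refine TopologicalSpace.IsSeparable.iUnion fun n => h x _ fun hu => ?_
    have ha : a ∈ closedBall x (dist x a - 1 / (n + 1 : ℝ)) := hu ▸ mem_univ a
    rw [mem_closedBall, dist_comm] at ha
    have : (0 : ℝ) < 1 / (n + 1 : ℝ) := by positivity
    linarith
  have hcount : {q : X | q ∈ D ∧ dist x q < dist x a}.Countable := by
    refine countable_of_separated_of_isSeparable hε (hD.mono fun q hq => hq.1) ?_ hS
    rintro q ⟨-, hq⟩
    obtain ⟨n, hn⟩ := exists_nat_one_div_lt (sub_pos.2 hq)
    refine mem_iUnion.2 ⟨n, ?_⟩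
    rw [mem_closedBall, dist_comm]
    linarith
  refine (hcount.preimage (f := ((↑) : D → X)) Subtype.val_injective).mono ?_
  intro q hq
  exact ⟨q.2, hq⟩

/-- The pair `{a, q}` as a point of the hyperspace. -/
def pairCL (a q : X) : CL X :=
  ⟨{a, q}, insert_nonempty _ _, (Set.toFinite _).isClosed⟩

/-- In the Wijsman topology `{a, q} → {a}` as `q` runs through a separated set along the
cocountable filter. -/
theorem tendsto_pair {ε : ℝ} (hε : 0 < ε) {D : Set X}
    (hD : D.Pairwise fun x y => ε ≤ dist x y)
    (h : ∀ (x : X) (α : ℝ), closedBall x α ≠ Set.univ →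
      TopologicalSpace.IsSeparable (closedBall x α)) (a : X) :
    Filter.Tendsto (fun q : D => pairCL a (q : X)) Filter.cocountable
      (@nhds (CL X) (wijsman X ‹MetricSpace X›) (pairCL a a)) := by
  rw [wijsman, nhds_iInf, Filter.tendsto_iInf]
  intro x
  rw [nhds_induced, Filter.tendsto_comap_iff]
  refine Filter.Tendsto.congr' ?_ tendsto_const_nhds
  have hmem : {q : D | dist x q < dist x a}ᶜ ∈ (Filter.cocountable : Filter D) := by
    rw [Filter.mem_cocountable, compl_compl]
    exact countable_dist_lt hε hD h x a
  filter_upwards [hmem] with q hq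
  have hq' : dist x a ≤ dist x q := not_lt.1 hq
  simp only [Function.comp, pairCL, pair_eq_singleton, infDist_singleton]
  apply le_antisymm
  · refine (le_infDist (insert_nonempty _ _)).2 ?_
    rintro y (rfl | rfl)
    · exact le_rfl
    · exact hq'
  · exact infDist_le_dist_of_mem (mem_insert _ _)

/-- For nonempty `S`, the closed sets lying in the closure of `S`, described by inequalities between distance
functionals. -/
def below (S : Set X) : Set (CL X) := {A | ∀ x, infDist x S ≤ infDist x A.1}

theorem isClosed_below (S : Set X) :
    IsClosed[wijsman X ‹MetricSpace X›] (below S) := by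
  have hset : below S = ⋂ x : X, {A : CL X | infDist x S ≤ infDist x A.1} := by
    ext A
    simp [below]
  rw [hset]
  let : TopologicalSpace (CL X) := wijsman X ‹MetricSpace X›
  refine isClosed_iInter fun x => ?_
  have hcont : Continuous (fun A : CL X => infDist x A.1) :=
    continuous_iInf_dom (i := x) continuous_induced_dom
  exact isClosed_le continuous_const hcont

theorem pairCL_mem_below {S : Set X} {a : X} (ha : a ∈ S) : pairCL a a ∈ below S := by
  intro x
  simpa [pairCL] using infDist_le_dist_of_mem ha

theorem disjoint_below {ε : ℝ} (hε : 0 < ε) {S T : Set X} (hS : S.Nonempty) (hT : T.Nonempty)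
    (hST : ∀ s ∈ S, ∀ t ∈ T, ε ≤ dist s t) : Disjoint (below S) (below T) := by
  rw [Set.disjoint_left]
  intro A hAS hAT
  obtain ⟨a, ha⟩ := A.2.1
  have h0 : infDist a A.1 = 0 := infDist_zero_of_mem ha
  obtain ⟨s, hs, has⟩ := (infDist_lt_iff hS).1
    (((hAS a).trans h0.le).trans_lt (half_pos hε))
  obtain ⟨t, ht, hat⟩ := (infDist_lt_iff hT).1
    (((hAT a).trans h0.le).trans_lt (half_pos hε))
  have h1 := hST s hs t ht
  have h2 := dist_triangle_left s t a
  linarith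

/-- Maximal `1 / (n + 1)`-separated sets have a dense union, so they cannot all have at most
`ℵ₁` points when the density exceeds `ℵ₁`. -/
theorem exists_separated_of_aleph_one_lt (hd : Cardinal.aleph 1 < density X inferInstance) :
    ∃ (ε : ℝ) (D : Set X), 0 < ε ∧ (D.Pairwise fun x y => ε ≤ dist x y) ∧
      Cardinal.aleph 1 < #D := by
  by_contra! hcon
  have hmax : ∀ ε : ℝ, 0 < ε → ∃ D : Set X, #D ≤ Cardinal.aleph 1 ∧
      ∀ x, ∃ y ∈ D, dist x y < ε := by
    intro ε hε
    obtain ⟨D, hD⟩ := zorn_subset {D : Set X | D.Pairwise fun x y => ε ≤ dist x y} (by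
      intro c hc hchain
      exact ⟨⋃₀ c, (pairwise_sUnion hchain.directedOn).2 hc, fun s hs => subset_sUnion_of_mem hs⟩)
    refine ⟨D, hcon ε D hε hD.prop, fun x => ?_⟩
    by_contra! hx
    have hins : (insert x D).Pairwise fun x y => ε ≤ dist x y :=
      hD.prop.insert fun y hy _ => ⟨hx y hy, dist_comm x y ▸ hx y hy⟩
    have hxD : x ∈ D := hD.le_of_ge hins (subset_insert x D) (mem_insert x D)
    have := hx x hxD
    rw [dist_self] at this
    linarith
  choose! D hDcard hDcov using fun n : ℕ =>
    hmax (1 / (n + 1 : ℝ)) (by positivity)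
  have hdense : Dense (⋃ n, D n) := by
    intro x
    rw [Metric.mem_closure_iff]
    intro ε hε
    obtain ⟨n, hn⟩ := exists_nat_one_div_lt hε
    obtain ⟨y, hy, hxy⟩ := hDcov n x
    exact ⟨y, mem_iUnion.2 ⟨n, hy⟩, hxy.trans hn⟩
  have hcard : #(⋃ n, D n) ≤ Cardinal.aleph 1 := by
    have h1 := Cardinal.mk_iUnion_le_lift.{u, 0} D
    simp only [Cardinal.lift_id'] at h1
    refine (le_trans (by simpa using h1) (mul_le_mul' (Cardinal.aleph0_le_aleph 1)
      (ciSup_le' hDcard))).trans ?_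
    rw [Cardinal.mul_eq_self (Cardinal.aleph0_le_aleph 1)]
  refine absurd hd (not_lt.2 ?_)
  unfold density
  have hinf : sInf {c : Cardinal.{u} | ∃ D : Set X, Dense D ∧ #↥D = c} ≤ Cardinal.aleph 1 :=
    le_trans (csInf_le' (show #(⋃ n, D n) ∈ _ from ⟨⋃ n, D n, hdense, rfl⟩)) hcard
  refine (add_le_add (Cardinal.aleph0_le_aleph 1) hinf).trans ?_
  rw [Cardinal.add_eq_self (Cardinal.aleph0_le_aleph 1)]

end Helpers

/-- if every proper closed ball of `(X,ρ)` is separable and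
`(CL(X), W_ρ)` is normal, then `d(X) ≤ ℵ₁`. -/
theorem stmt_17 (X : Type u) [MetricSpace X]
    (h : ∀ (x : X) (α : ℝ), closedBall x α ≠ Set.univ →
      TopologicalSpace.IsSeparable (closedBall x α))
    (hn : @NormalSpace (CL X) (wijsman X ‹MetricSpace X›)) :
    density X inferInstance ≤ Cardinal.aleph 1 := by
  by_contra hd
  obtain ⟨ε, D, hε, hD, hcard⟩ := exists_separated_of_aleph_one_lt (not_le.1 hd)
  obtain ⟨P, hP⟩ := Cardinal.le_mk_iff_exists_set.1 hcard.le
  have hω : ℵ₀ ≤ Cardinal.aleph.{u} 1 := Cardinal.aleph0_le_aleph 1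
  -- Fewer than `#D` points of `D` are excluded when countably many are discarded for each `p ∈ P`.
  have hfresh : ∀ C : P → Set D, (∀ p, (C p).Countable) → ∃ q : D, q ∉ P ∧ ∀ p, q ∉ C p := by
    intro C hC
    have hle : #↥(P ∪ ⋃ p, C p) ≤ Cardinal.aleph 1 := by
      refine (Cardinal.mk_union_le _ _).trans ?_
      have h1 : #(⋃ p, C p) ≤ Cardinal.aleph 1 := by
        refine (Cardinal.mk_iUnion_le C).trans ?_
        rw [hP]
        refine (mul_le_mul' le_rfl (ciSup_le' fun p =>
          (Cardinal.le_aleph0_iff_set_countable.2 (hC p)).trans hω)).trans ?_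
        rw [Cardinal.mul_eq_self hω]
      refine (add_le_add hP.le h1).trans ?_
      rw [Cardinal.add_eq_self hω]
    have hne : P ∪ ⋃ p, C p ≠ Set.univ := fun hu => by
      rw [hu, Cardinal.mk_univ] at hle
      exact absurd hcard (not_lt.2 hle)
    obtain ⟨q, hq⟩ := (Set.ne_univ_iff_exists_notMem _).1 hne
    exact ⟨q, fun hqP => hq (Or.inl hqP), fun p hp => hq (Or.inr (mem_iUnion.2 ⟨p, hp⟩))⟩
  have hPunc : ¬ P.Countable := fun hc => by
    have h1 := Cardinal.le_aleph0_iff_set_countable.2 hc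
    rw [hP] at h1
    exact absurd h1 (not_le.2 Cardinal.aleph0_lt_aleph_one)
  have hPne : P.Nonempty := by
    by_contra hne
    rw [Set.not_nonempty_iff_eq_empty] at hne
    exact hPunc (hne ▸ Set.countable_empty)
  obtain ⟨q₀, hq₀, -⟩ := hfresh (fun _ => ∅) fun _ => Set.countable_empty
  let S : Set X := (↑) '' P
  let T : Set X := (↑) '' Pᶜ
  have hdisj : Disjoint (below S) (below T) := by
    refine disjoint_below hε (hPne.image _) (Set.Nonempty.image _ ⟨q₀, hq₀⟩) ?_
    rintro _ ⟨s, hs, rfl⟩ _ ⟨t, ht, rfl⟩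
    exact hD s.2 t.2 fun hst => ht (Subtype.ext hst ▸ hs)
  let : TopologicalSpace (CL X) := wijsman X ‹MetricSpace X›
  obtain ⟨U, V, hU, hV, hSU, hTV, hUV⟩ :=
    normal_separation (isClosed_below S) (isClosed_below T) hdisj
  have hbad : ∀ (W : Set (CL X)), IsOpen W → ∀ a : X,
      pairCL a a ∈ W → {q : D | pairCL a (q : X) ∉ W}.Countable := by
    intro W hW a ha
    have h1 := tendsto_pair hε hD h a (hW.mem_nhds ha)
    exact Filter.mem_cocountable.1 (Filter.mem_map.1 h1)
  obtain ⟨q, hqP, hq⟩ := hfresh (fun p => {q : D | pairCL (p : X) (q : X) ∉ U}) fun p =>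
    hbad U hU _ (hSU (pairCL_mem_below ⟨p, p.2, rfl⟩))
  have hqV := hbad V hV q (hTV (pairCL_mem_below ⟨q, hqP, rfl⟩))
  obtain ⟨p, hpP, hp⟩ : ∃ p ∈ P, pairCL (q : X) (p : X) ∈ V := by
    by_contra! hcon
    exact hPunc (hqV.mono hcon)
  have hswap : pairCL (q : X) (p : X) = pairCL (p : X) (q : X) :=
    Subtype.ext (Set.pair_comm _ _)
  rw [hswap] at hp
  exact Set.disjoint_left.1 hUV (not_not.1 (hq ⟨p, hpP⟩)) hp
end

section
/- Let (X, ‖·‖) be a normed linear space over the reals and let ρ be the metric generated by the norm, ρ(x,y) = ‖x − y‖. If (CL(X), W_ρ) is a normal topological space, then X is separable. -/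
/-!
If `X` is a nonseparable real normed space, then `CL X` with the Wijsman topology contains a closed
copy of `ℕ^I` with `I` uncountable, and such a power of `ℕ` is not normal (A. H. Stone).

Since `X` is infinite-dimensional, Riesz's lemma gives a sequence `q` in the ball of radius `R` whose
terms are at mutual distance at least `1`. Put `r = R + 1`. Since `X` is nonseparable, rescaling
gives an uncountable family of centres `p i` at mutual distances greater than `4 r`. To
`s : I → ℕ` assign the closed set `wijsmanSet r p q s`, obtained from `X` by removing from each ball
`B (p i, r)` everything but the point `p i + q (s i)`. The distance from a point `x` to this set
is `0` if `x` lies in no ball, and depends only on `s i` if `x` lies in the ball about `p i`. So the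
map is continuous (`wijsmanMap_continuous`). Conversely, if the images of an ultrafilter on `ℕ^I`
converge to a closed set `A`, then `A` meets every ball, because the distance from `p i` to `A` is at
most `R < r`, and the separation of `q` forces each coordinate to be eventually constant. So the map
is proper (`wijsmanMap_isProperMap`); being injective, it is a closed embedding.

Non-normality of `ℕ^I` is `not_normalSpace_pi_nat`.
-/

open Cardinal Set Metric Topology

universe u v

/-! ### Uncountable powers of `ℕ` are not normal -/

section Stone

variable {I : Type*}

/-- The functions taking every value other than `k` at most once. -/
def almostInj (I : Type*) (k : ℕ) : Set (I → ℕ) :=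
  {f | ∀ i j, i ≠ j → f i = f j → f i = k}

lemma isClosed_almostInj (k : ℕ) : IsClosed (almostInj I k) := by
  have h : almostInj I k = ⋂ (i : I) (j : I) (_ : i ≠ j),
      {f : I → ℕ | f i = f j → f i = k} := by
    ext f; simp [almostInj]
  rw [h]
  refine isClosed_iInter fun i => isClosed_iInter fun j => isClosed_iInter fun _ => ?_
  have hc : Continuous fun f : I → ℕ => (f i, f j) := by fun_prop
  exact (isClosed_discrete {p : ℕ × ℕ | p.1 = p.2 → p.1 = k}).preimage hc

lemma exists_finset_cylinder_subset {U : Set (I → ℕ)} (hU : IsOpen U) {f : I → ℕ} (hf : f ∈ U) :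
    ∃ a : Finset I, ∀ g : I → ℕ, (∀ i ∈ a, g i = f i) → g ∈ U := by
  obtain ⟨a, u, hu, hs⟩ := isOpen_pi_iff.1 hU f hf
  exact ⟨a, fun g hg => hs fun i hi => by rw [hg i hi]; exact (hu i hi).2⟩

open Classical in
/-- The function numbering the members of the list `l` from `2` on, with the value `k` off `l`. -/
noncomputable def listFun (k : ℕ) (l : List I) (i : I) : ℕ :=
  if i ∈ l then l.idxOf i + 2 else k

lemma listFun_mem_almostInj (k : ℕ) (l : List I) : listFun k l ∈ almostInj I k := by
  classical
  intro i j hij h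
  unfold listFun at *
  split_ifs at * with h1 h2
  · exact absurd ((List.idxOf_inj h1).1 (by omega)) hij
  · omega
  all_goals rfl

/-- **Stone's theorem**: an uncountable power of `ℕ` is not normal. If open sets `U`, `V` separate
`almostInj I 0` from `almostInj I 1`, one builds an increasing sequence of lists such that the
cylinder over `listFun 0 (l n)` on the members of `l (n + 1)` lies in `U`. Numbering the union of the
lists and putting `1` elsewhere yields a point of `V`, each neighbourhood of which meets one of
these cylinders. -/
theorem not_normalSpace_pi_nat [Uncountable I] : ¬ NormalSpace (I → ℕ) := by
  classical
  intro hn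
  have hdisj : Disjoint (almostInj I 0) (almostInj I 1) := by
    rw [Set.disjoint_left]
    intro f h0 h1
    refine not_countable (α := I) (Function.Injective.countable (f := f) fun i j hij => ?_)
    by_contra hne
    have := h0 i j hne hij
    have := h1 i j hne hij
    omega
  obtain ⟨U, V, hU, hV, hFU, hFV, hUV⟩ :=
    normal_separation (isClosed_almostInj 0) (isClosed_almostInj 1) hdisj
  have hφ : ∀ l : List I, ∃ a : Finset I, ∀ g : I → ℕ,
      (∀ i ∈ a, g i = listFun 0 l i) → g ∈ U := fun l =>
    exists_finset_cylinder_subset hU (hFU (listFun_mem_almostInj 0 l))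
  choose φ hφ using hφ
  let l : ℕ → List I := fun n => Nat.rec (motive := fun _ => List I) [] (fun _ l => l ++ (φ l).toList) n
  have hl : ∀ n, l (n + 1) = l n ++ (φ (l n)).toList := fun n => rfl
  have hpre : ∀ m n, m ≤ n → l m <+: l n := by
    intro m n hmn
    induction n, hmn using Nat.le_induction with
    | base => exact List.prefix_rfl
    | succ n _ ih => exact ih.trans (hl n ▸ List.prefix_append _ _)
  let y : I → ℕ := fun i => if h : ∃ n : ℕ, i ∈ l n then (l h.choose).idxOf i + 2 else 1
  have hy : ∀ n i, i ∈ l n → y i = (l n).idxOf i + 2 := by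
    intro n i hi
    have h : ∃ n, i ∈ l n := ⟨n, hi⟩
    simp only [y, dif_pos h]
    rcases le_total n h.choose with hle | hle
    · rw [(hpre _ _ hle).idxOf_eq_of_mem hi]
    · rw [(hpre _ _ hle).idxOf_eq_of_mem h.choose_spec]
  have hy' : ∀ i, (¬ ∃ n, i ∈ l n) → y i = 1 := fun i hi => by simp only [y, dif_neg hi]
  have hyF : y ∈ almostInj I 1 := by
    intro i j hij h
    by_cases hi : ∃ n, i ∈ l n
    · by_cases hj : ∃ n, j ∈ l n
      · obtain ⟨m, hm⟩ := hi
        obtain ⟨n, hn⟩ := hj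
        have hm' := (hpre _ _ (le_max_left m n)).subset hm
        have hn' := (hpre _ _ (le_max_right m n)).subset hn
        rw [hy _ _ hm', hy _ _ hn'] at h
        exact absurd ((List.idxOf_inj hm').1 (by omega)) hij
      · rw [h, hy' j hj]
    · exact hy' i hi
  obtain ⟨b, hb⟩ := exists_finset_cylinder_subset hV (hFV hyF)
  -- The finite set `b` meets the union of the lists within a single `l n`.
  obtain ⟨n, hn⟩ : ∃ n, ∀ i ∈ b, (∃ m, i ∈ l m) → i ∈ l n := by
    choose! N hN using fun (i : I) (h : ∃ m, i ∈ l m) => h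
    exact ⟨b.sup N, fun i hi h => (hpre _ _ (Finset.le_sup hi)).subset (hN i h)⟩
  let z : I → ℕ := fun i =>
    if i ∈ l n then (l n).idxOf i + 2 else if i ∈ φ (l n) then 0 else 1
  have hzU : z ∈ U := by
    refine hφ (l n) z fun i hi => ?_
    simp only [z, listFun]
    split_ifs <;> rfl
  have hzV : z ∈ V := by
    refine hb z fun i hi => ?_
    by_cases h : ∃ m, i ∈ l m
    · have := hn i hi h
      rw [hy n i this]
      simp only [z, if_pos this]
    · rw [hy' i h]
      have h1 : i ∉ l n := fun h' => h ⟨n, h'⟩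
      have h2 : i ∉ φ (l n) := fun h' => h ⟨n + 1, by rw [hl]; simp [h']⟩
      simp only [z, if_neg h1, if_neg h2]
  exact Set.disjoint_left.1 hUV hzU hzV

end Stone

/-! ### Uncountable separated sets in nonseparable normed spaces -/

/-- In a normed space, uncountable separated sets exist at every scale as soon as the space is
nonseparable, because a countable net at one scale can be rescaled to any other. -/
lemma exists_uncountable_separated {X : Type*} [NormedAddCommGroup X] [NormedSpace ℝ X]
    (hX : ¬ TopologicalSpace.SeparableSpace X) {c : ℝ} (hc : 0 < c) :
    ∃ M : Set X, ¬ M.Countable ∧ M.Pairwise fun x y => c < dist x y := by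
  by_contra! hM
  apply hX
  obtain ⟨M, hMmax⟩ : ∃ M : Set X, Maximal (· ∈ {M : Set X | M.Pairwise fun x y => c < dist x y}) M :=
    zorn_subset _ fun C hC hch => ⟨⋃₀ C, (Set.pairwise_sUnion hch.directedOn).2 hC,
      fun s hs => Set.subset_sUnion_of_mem hs⟩
  have hnet : ∀ x, ∃ y ∈ M, dist x y ≤ c := by
    intro x
    by_contra! hx
    have hins : (insert x M).Pairwise fun x y => c < dist x y :=
      hMmax.prop.insert fun y hy _ => ⟨hx y hy, by rw [dist_comm]; exact hx y hy⟩
    have hxM : x ∈ M := hMmax.le_of_ge hins (Set.subset_insert x M) (Set.mem_insert x M)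
    have := hx x hxM
    rw [dist_self] at this
    linarith
  have hcount : M.Countable := by
    by_contra hcon
    exact hM M hcon hMmax.prop
  have : SecondCountableTopology X := by
    refine Metric.secondCountable_of_almost_dense_set fun ε hε =>
      ⟨(fun y => (ε / c) • y) '' M, hcount.image _, fun x => ?_⟩
    obtain ⟨y, hy, hxy⟩ := hnet ((c / ε) • x)
    refine ⟨_, ⟨y, hy, rfl⟩, ?_⟩
    have hx : x = (ε / c) • (c / ε) • x := by
      rw [smul_smul, div_mul_div_cancel₀ hc.ne', div_self hε.ne', one_smul]
    change dist x ((ε / c) • y) ≤ ε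
    rw [hx, dist_smul₀, Real.norm_of_nonneg (by positivity)]
    calc ε / c * dist ((c / ε) • x) y ≤ ε / c * c := by gcongr
      _ = ε := by field_simp
  infer_instance

/-! ### A closed copy of a power of `ℕ` in the hyperspace -/

section Embedding

variable {X : Type u} [NormedAddCommGroup X] {I : Type v} {r R : ℝ} {p : I → X} {q : ℕ → X}

lemma wijsman_continuous_infDist (x : X) :
    @Continuous _ _ (wijsman X inferInstance) _ fun A : CL X => infDist x A.1 :=
  continuous_iInf_dom (i := x) continuous_induced_dom

lemma CL.ext_infDist {A B : CL X} (h : ∀ x, infDist x A.1 = infDist x B.1) : A = B := by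
  apply Subtype.ext
  ext x
  rw [A.2.2.mem_iff_infDist_zero A.2.1, B.2.2.mem_iff_infDist_zero B.2.1, h]

/-- The space `X` with each ball `B (p i, r)` reduced to the single point `p i + q (s i)`. -/
def wijsmanSet (r : ℝ) (p : I → X) (q : ℕ → X) (s : I → ℕ) : Set X :=
  {x | ∀ i, r ≤ dist x (p i) ∨ x = p i + q (s i)}

lemma isClosed_wijsmanSet (s : I → ℕ) : IsClosed (wijsmanSet r p q s) := by
  have h : wijsmanSet r p q s = ⋂ i, ({x | r ≤ dist x (p i)} ∪ {p i + q (s i)}) := by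
    ext x; simp [wijsmanSet, or_comm]
  rw [h]
  exact isClosed_iInter fun i =>
    (isClosed_le continuous_const (by fun_prop)).union isClosed_singleton

lemma point_mem_wijsmanSet (hp : Pairwise fun i j => 4 * r < dist (p i) (p j))
    (hq : ∀ n, ‖q n‖ < r) (s : I → ℕ) (i : I) : p i + q (s i) ∈ wijsmanSet r p q s := by
  intro j
  by_cases hij : i = j
  · exact Or.inr (by rw [hij])
  · left
    have h1 := hp hij
    have h2 := dist_triangle (p i) (p i + q (s i)) (p j)
    have h3 : dist (p i) (p i + q (s i)) = ‖q (s i)‖ := by simp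
    have h4 := hq (s i)
    have h5 := norm_nonneg (q (s i))
    linarith

lemma add_mem_wijsmanSet (hp : Pairwise fun i j => 4 * r < dist (p i) (p j))
    {w : X} (hr : 0 ≤ r) (hw : ‖w‖ = r) (s : I → ℕ) (i : I) : p i + w ∈ wijsmanSet r p q s := by
  intro j
  left
  by_cases hij : i = j
  · subst hij
    simp [hw]
  · have h1 := hp hij
    have h2 := dist_triangle (p i) (p i + w) (p j)
    have h3 : dist (p i) (p i + w) = r := by simp [hw]
    linarith

lemma infDist_wijsmanSet_le (hp : Pairwise fun i j => 4 * r < dist (p i) (p j))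
    (hq : ∀ n, ‖q n‖ < r) {w : X} (hr : 0 ≤ r) (hw : ‖w‖ = r) {x : X} {i : I}
    (hx : dist x (p i) < r) {s t : I → ℕ} (hst : s i = t i) :
    infDist x (wijsmanSet r p q s) ≤ infDist x (wijsmanSet r p q t) := by
  refine (le_infDist ⟨_, point_mem_wijsmanSet hp hq t i⟩).2 fun y hy => ?_
  by_cases hys : y ∈ wijsmanSet r p q s
  · exact infDist_le_dist_of_mem hys
  -- A point of the second set alone lies in another ball, hence farther away than `p i + w`.
  · simp only [wijsmanSet, Set.mem_ofPred_eq, not_forall, not_or, not_le] at hys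
    obtain ⟨j, hj, hne⟩ := hys
    have hij : i ≠ j := by
      rintro rfl
      rcases hy i with h | h
      · linarith
      · exact hne (by rw [hst]; exact h)
    have h1 := hp hij
    have h2 := dist_triangle4 (p i) x y (p j)
    have h3 := infDist_le_dist_of_mem (x := x) (add_mem_wijsmanSet (q := q) hp hr hw s i)
    have h4 := dist_triangle x (p i) (p i + w)
    have h5 : dist (p i) (p i + w) = r := by simp [hw]
    rw [dist_comm (p i) x] at h2
    linarith

/-- If the distance functionals of `wijsmanSet r p q s` converge along a filter to those of a set
`A`, then each coordinate of `s` is eventually constant. -/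
lemma eventually_coord_eq (hp : Pairwise fun i j => 4 * r < dist (p i) (p j))
    (hq : ∀ n, ‖q n‖ < r) (hq' : Pairwise fun m n => 1 ≤ ‖q m - q n‖)
    (hqR : ∀ n, ‖q n‖ ≤ R) (hRr : R < r) {𝒰 : Filter (I → ℕ)} [𝒰.NeBot] {A : Set X}
    (hA : A.Nonempty)
    (hlim : ∀ x, Filter.Tendsto (fun s => infDist x (wijsmanSet r p q s)) 𝒰 (𝓝 (infDist x A)))
    (i : I) : ∃ n, ∀ᶠ s in 𝒰, s i = n := by
  have hle : infDist (p i) A ≤ R := le_of_tendsto' (hlim (p i)) fun s =>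
    (infDist_le_dist_of_mem (point_mem_wijsmanSet hp hq s i)).trans (by simpa using hqR (s i))
  obtain ⟨a, haA, ha⟩ := (infDist_lt_iff hA).1 (hle.trans_lt hRr)
  have hη : 0 < min (r - dist (p i) a) (1 / 2) := lt_min (by linarith) (by norm_num)
  have h0 := hlim a
  rw [infDist_zero_of_mem haA] at h0
  -- Points of the image close to `a` lie in the ball about `p i`, so are its marked point.
  have hclose : ∀ᶠ s in 𝒰, dist a (p i + q (s i)) < 1 / 2 := by
    filter_upwards [h0.eventually (gt_mem_nhds hη)] with s hs
    obtain ⟨y, hy, hay⟩ := (infDist_lt_iff ⟨_, point_mem_wijsmanSet hp hq s i⟩).1 hs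
    rcases hy i with h | h
    · have h1 := hay.trans_le (min_le_left _ _)
      have h2 := dist_triangle (p i) a y
      rw [dist_comm y] at h
      linarith
    · rw [← h]
      exact hay.trans_le (min_le_right _ _)
  obtain ⟨s₀, hs₀⟩ := hclose.exists
  refine ⟨s₀ i, hclose.mono fun s hs => ?_⟩
  by_contra hne
  have h1 : 1 ≤ ‖q (s i) - q (s₀ i)‖ := hq' hne
  have h2 := dist_triangle_left (p i + q (s i)) (p i + q (s₀ i)) a
  rw [dist_add_left, dist_eq_norm] at h2
  linarith

/-- The map `s ↦ wijsmanSet r p q s` into the hyperspace. -/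
def wijsmanMap [Nonempty I] (hp : Pairwise fun i j => 4 * r < dist (p i) (p j))
    (hq : ∀ n, ‖q n‖ < r) (s : I → ℕ) : CL X :=
  ⟨wijsmanSet r p q s, ⟨_, point_mem_wijsmanSet hp hq s (Classical.arbitrary I)⟩,
    isClosed_wijsmanSet s⟩

variable [Nonempty I]

lemma wijsmanMap_continuous (hp : Pairwise fun i j => 4 * r < dist (p i) (p j))
    (hq : ∀ n, ‖q n‖ < r) {w : X} (hr : 0 ≤ r) (hw : ‖w‖ = r) :
    @Continuous _ _ _ (wijsman X inferInstance) (wijsmanMap hp hq) := by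
  refine continuous_iInf_rng.2 fun x => continuous_induced_rng.2 ?_
  change Continuous fun s => infDist x (wijsmanSet r p q s)
  by_cases hx : ∀ i, r ≤ dist x (p i)
  · have h0 : (fun s => infDist x (wijsmanSet r p q s)) = fun _ => 0 := by
      funext s
      exact infDist_zero_of_mem fun i => Or.inl (hx i)
    rw [h0]
    exact continuous_const
  · push Not at hx
    obtain ⟨i, hi⟩ := hx
    have h0 : (fun s => infDist x (wijsmanSet r p q s)) =
        (fun n : ℕ => infDist x (wijsmanSet r p q fun _ => n)) ∘ fun s : I → ℕ => s i := by
      funext s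
      exact le_antisymm (infDist_wijsmanSet_le hp hq hr hw hi rfl)
        (infDist_wijsmanSet_le hp hq hr hw hi rfl)
    rw [h0]
    exact continuous_of_discreteTopology.comp (continuous_apply i)

lemma wijsmanMap_injective (hp : Pairwise fun i j => 4 * r < dist (p i) (p j))
    (hq : ∀ n, ‖q n‖ < r) (hq' : Pairwise fun m n => 1 ≤ ‖q m - q n‖) :
    Function.Injective (wijsmanMap hp hq) := by
  intro s t hst
  have hst' : wijsmanSet r p q s = wijsmanSet r p q t := congrArg Subtype.val hst
  funext i
  have hmem := point_mem_wijsmanSet hp hq s i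
  rw [hst'] at hmem
  rcases hmem i with h | h
  · have := hq (s i)
    simp at h
    linarith
  · by_contra hne
    have h1 : 1 ≤ ‖q (s i) - q (t i)‖ := hq' hne
    rw [add_left_cancel h, sub_self, norm_zero] at h1
    linarith

lemma wijsmanMap_isProperMap (hp : Pairwise fun i j => 4 * r < dist (p i) (p j))
    (hq : ∀ n, ‖q n‖ < r) (hq' : Pairwise fun m n => 1 ≤ ‖q m - q n‖)
    (hqR : ∀ n, ‖q n‖ ≤ R) (hRr : R < r) {w : X} (hr : 0 ≤ r) (hw : ‖w‖ = r) :
    @IsProperMap _ _ _ (wijsman X inferInstance) (wijsmanMap hp hq) := by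
  let : TopologicalSpace (CL X) := wijsman X inferInstance
  have hcont : Continuous (wijsmanMap hp hq) := wijsmanMap_continuous hp hq hr hw
  have hdist : ∀ x : X, Continuous fun A : CL X => infDist x A.1 := wijsman_continuous_infDist
  refine isProperMap_iff_ultrafilter.2 ⟨hcont, fun 𝒰 A hA => ?_⟩
  have hlim : ∀ x, Filter.Tendsto (fun s => infDist x (wijsmanMap hp hq s).1) 𝒰
      (𝓝 (infDist x A.1)) := fun x => ((hdist x).tendsto A).comp hA
  have hev : ∀ i, ∃ n, ∀ᶠ s in (𝒰 : Filter (I → ℕ)), s i = n :=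
    eventually_coord_eq hp hq hq' hqR hRr A.2.1 hlim
  choose t ht using hev
  have hle : (𝒰 : Filter (I → ℕ)) ≤ 𝓝 t := by
    rw [nhds_pi, Filter.le_pi]
    exact fun i => tendsto_nhds_of_eventually_eq (ht i)
  refine ⟨t, ?_, hle⟩
  have heq : ∀ x, infDist x (wijsmanMap hp hq t).1 = infDist x A.1 := fun x =>
    tendsto_nhds_unique ((((hdist x).comp hcont).tendsto t).mono_left hle) (hlim x)
  exact CL.ext_infDist heq

end Embedding

/-- if `X` is a real normed linear space, `ρ(x,y) = ‖x - y‖`, and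
`(CL(X), W_ρ)` is normal, then `X` is separable. -/
theorem stmt_19 (X : Type u) [NormedAddCommGroup X] [NormedSpace ℝ X]
    (hn : @NormalSpace (CL X) (wijsman X inferInstance)) :
    TopologicalSpace.SeparableSpace X := by
  by_contra hX
  let : TopologicalSpace (CL X) := wijsman X inferInstance
  have hfin : ¬ FiniteDimensional ℝ X := fun h => hX <| by
    have := FiniteDimensional.proper_real X
    infer_instance
  obtain ⟨R, q, hR, hqR, hq'⟩ := exists_seq_norm_le_one_le_norm_sub hfin
  obtain ⟨M, hM, hMsep⟩ := exists_uncountable_separated hX (c := 4 * (R + 1)) (by linarith)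
  have : Uncountable M := by
    rw [← not_countable_iff]
    exact fun h => hM h.to_set
  have : Nontrivial X := by
    by_contra hnt
    rw [not_nontrivial_iff_subsingleton] at hnt
    exact hX inferInstance
  obtain ⟨w, hw⟩ := exists_norm_eq X (c := R + 1) (by linarith)
  have hp : Pairwise fun i j : M => 4 * (R + 1) < dist (i : X) (j : X) := fun i j hij =>
    hMsep i.2 j.2 (Subtype.coe_ne_coe.2 hij)
  have hq : ∀ n, ‖q n‖ < R + 1 := fun n => (hqR n).trans_lt (by linarith)
  have hprop := wijsmanMap_isProperMap hp hq hq' hqR (by linarith) (by linarith) hw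
  have hemb : IsClosedEmbedding (wijsmanMap hp hq) :=
    .of_continuous_injective_isClosedMap hprop.continuous (wijsmanMap_injective hp hq hq')
      hprop.isClosedMap
  exact not_normalSpace_pi_nat (I := M) hemb.normalSpace
end
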